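/- Let $F$ be a field, let $K < H$ be positive integers, and let $G$ be a $K \times H$ matrix over $F$ such that every set of $K$ columns of $G$ is linearly independent. Define the linear map $\Phi : F^{H-K} \times F^{K} \to F^{H}$ by $\Phi(w,x)_j = w_j + (xG)_j$ for $1 \le j \le H-K$ and $\Phi(w,x)_j = (xG)_j$ for $H-K < j \le H$. Then $\Phi$ is bijective; in particular, the message $w$ is uniquely determined by the transmitted vector $\Phi(w,x)$. -/

import Mathlib

open Finset

/-- If every `n` columns of `G` are linearly independent, then the square submatrix on any `n`
distinct columns is invertible. -/
theorem isUnit_submatrix_of_linearIndependent_cols {F m : Type*} [Field F] {n : ℕ}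
    {G : Matrix (Fin n) m F}
    (hG : ∀ S : Finset m, S.card = n →
      LinearIndependent F (fun j : S => fun i : Fin n => G i (j : m)))
    (e : Fin n ↪ m) : IsUnit (G.submatrix id e) := by
  have hS : (univ.map e).card = n := by simp
  rw [← Matrix.linearIndependent_cols_iff_isUnit]
  refine (hG _ hS).comp (fun k => ⟨e k, mem_map_of_mem e (mem_univ k)⟩) fun a b hab => ?_
  exact e.injective (congrArg Subtype.val hab)

theorem encoding_map_bijective
    {F : Type*} [Field F] {K H : ℕ} (hK : 0 < K) (hKH : K < H)
    (G : Matrix (Fin K) (Fin H) F)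
    (hG : ∀ S : Finset (Fin H), S.card = K →
      LinearIndependent F (fun j : S => fun i : Fin K => G i (j : Fin H))) :
    Function.Bijective (fun p : (Fin (H - K) → F) × (Fin K → F) =>
      fun j : Fin H =>
        if h : (j : ℕ) < H - K then p.1 ⟨(j : ℕ), h⟩ + Matrix.vecMul p.2 G j
        else Matrix.vecMul p.2 G j) := by
  let e : Fin K ↪ Fin H :=
    ⟨fun k => ⟨H - K + k, by omega⟩, fun a b hab => by
      simp only [Fin.mk.injEq] at hab
      exact Fin.ext (by omega)⟩
  have hA := isUnit_submatrix_of_linearIndependent_cols hG e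
  have hmul (x : Fin K → F) (k : Fin K) :
      Matrix.vecMul x (G.submatrix id e) k = Matrix.vecMul x G (e k) := rfl
  have he (k : Fin K) : ¬ ((e k : Fin H) : ℕ) < H - K := by
    change ¬ H - K + (k : ℕ) < H - K
    omega
  constructor
  · rintro ⟨w, x⟩ ⟨w', x'⟩ hp
    have hx : x = x' := by
      refine Matrix.vecMul_injective_iff_isUnit.2 hA (funext fun k => ?_)
      simpa only [hmul, dif_neg (he k)] using congrFun hp (e k)
    subst hx
    refine Prod.ext (funext fun j => ?_) rfl
    simpa using congrFun hp ⟨j, by omega⟩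
  · intro y
    obtain ⟨x, hx⟩ := Matrix.vecMul_surjective_iff_isUnit.2 hA (fun k => y (e k))
    refine ⟨(fun j => y ⟨j, by omega⟩ - Matrix.vecMul x G ⟨j, by omega⟩, x), funext fun j => ?_⟩
    by_cases h : (j : ℕ) < H - K
    · simp [h]
    · have hj : e ⟨j - (H - K), by omega⟩ = j :=
        Fin.ext (by change H - K + ((j : ℕ) - (H - K)) = j; omega)
      have hxj := congrFun hx ⟨j - (H - K), by omega⟩
      simp only [hmul, hj] at hxj
      simpa only [dif_neg h] using hxj
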